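/- Let X be a centered Gaussian random vector in ℝ^N with covariance matrix K, and let A ∈ ℕ with A ≥ 2. Then rank(K) ≥ A if and only if E[‖X‖^{−(A−1)}] < ∞. -/

import Mathlib

open MeasureTheory ProbabilityTheory
open scoped RealInnerProductSpace

/-- The covariance matrix `K = E[X Xᵀ]` of a random vector `X : Ω → ℝᴺ`. -/
noncomputable def covMat {Ω : Type*} [MeasurableSpace Ω] (P : Measure Ω) {N : ℕ}
    (X : Ω → EuclideanSpace ℝ (Fin N)) : Matrix (Fin N) (Fin N) ℝ :=
  Matrix.of fun i j => ∫ ω, X ω i * X ω j ∂P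

lemma g1 (v : NNReal) : ∃ c C : ℝ, 0 < c ∧ 0 < C ∧ ∀ ε : ℝ, 0 ≤ ε → ε ≤ 1 →
    ENNReal.ofReal (c * ε ^ (if v ≠ 0 then 1 else 0)) ≤ gaussianReal 0 v (Set.Icc (-ε) ε) ∧
    gaussianReal 0 v (Set.Icc (-ε) ε) ≤ ENNReal.ofReal (C * ε ^ (if v ≠ 0 then 1 else 0)) := by
  by_cases hv : v = 0
  · subst hv
    refine ⟨1, 1, one_pos, one_pos, fun ε h0 h1 => ?_⟩
    have : (0:ℝ) ∈ Set.Icc (-ε) ε := ⟨by linarith, h0⟩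
    simp [gaussianReal_zero_var, this]
  · have hv' : (0:ℝ) < v := by positivity
    refine ⟨2 * ((√(2 * Real.pi * v))⁻¹ * Real.exp (-1 / (2 * v))), 2 * (√(2 * Real.pi * v))⁻¹,
      by positivity, by positivity, fun ε h0 h1 => ?_⟩
    have hvol : volume (Set.Icc (-ε) ε) = ENNReal.ofReal (2 * ε) := by
      rw [Real.volume_Icc]; congr 1; ring
    rw [gaussianReal_apply _ hv, if_pos hv, pow_one]
    constructor
    · have h : ∫⁻ x in Set.Icc (-ε) ε, ENNReal.ofReal ((√(2 * Real.pi * v))⁻¹ * Real.exp (-1 / (2 * v)))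
          ≤ ∫⁻ x in Set.Icc (-ε) ε, gaussianPDF 0 v x := by
        refine setLIntegral_mono (measurable_gaussianPDF 0 v) fun x hx => ?_
        rw [gaussianPDF_def, gaussianPDFReal_def]
        refine ENNReal.ofReal_le_ofReal ?_
        have : x ^ 2 ≤ 1 := by nlinarith [hx.1, hx.2]
        dsimp only
        gcongr
        simpa using this
      refine le_trans (le_of_eq ?_) h
      rw [setLIntegral_const, hvol, ← ENNReal.ofReal_mul (by positivity)]
      congr 1; ring
    · have h : ∫⁻ x in Set.Icc (-ε) ε, gaussianPDF 0 v x ≤ 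
          ∫⁻ x in Set.Icc (-ε) ε, ENNReal.ofReal ((√(2 * Real.pi * v))⁻¹) := by
        refine setLIntegral_mono measurable_const fun x hx => ?_
        rw [gaussianPDF_def, gaussianPDFReal_def]
        refine ENNReal.ofReal_le_ofReal ?_
        refine mul_le_of_le_one_right (by positivity) ?_
        rw [Real.exp_le_one_iff]
        apply div_nonpos_of_nonpos_of_nonneg
        · nlinarith [sq_nonneg (x - 0)]
        · positivity
      refine h.trans (le_of_eq ?_)
      rw [setLIntegral_const, hvol, ← ENNReal.ofReal_mul (by positivity)]
      congr 1; ring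

lemma g2 {Ω ι : Type*} [MeasurableSpace Ω] [Fintype ι] (P : Measure Ω)
    (Y : ι → Ω → ℝ) (hY : ∀ i, Measurable (Y i)) (hi : iIndepFun Y P) (v : ι → NNReal)
    (hl : ∀ i, P.map (Y i) = gaussianReal 0 (v i)) (R : Ω → ℝ) (hR0 : ∀ ω, 0 ≤ R ω)
    (hR : ∀ ω, R ω ^ 2 = ∑ i, Y i ω ^ 2) :
    ∃ c C : ℝ, 0 < c ∧ 0 < C ∧ ∀ ε : ℝ, 0 ≤ ε → ε ≤ 1 →
    ENNReal.ofReal (c * ε ^ (Fintype.card {i // v i ≠ 0})) ≤ P {ω | R ω ≤ ε} ∧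
    P {ω | R ω ≤ ε} ≤ ENNReal.ofReal (C * ε ^ (Fintype.card {i // v i ≠ 0})) := by
  choose c C hc hC h using fun i => g1 (v i)
  have hpr : ∀ ε : ℝ, P {ω | ∀ i, Y i ω ∈ Set.Icc (-ε) ε}
      = ∏ i, gaussianReal 0 (v i) (Set.Icc (-ε) ε) := by
    intro ε
    have := hi.measure_inter_preimage_eq_mul Finset.univ
      (sets := fun _ => Set.Icc (-ε) ε) (fun i _ => measurableSet_Icc)
    have e : {ω | ∀ i, Y i ω ∈ Set.Icc (-ε) ε}
      = ⋂ i ∈ Finset.univ, Y i ⁻¹' Set.Icc (-ε) ε := by ext; simp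
    rw [e, this]
    refine Finset.prod_congr rfl fun i _ => ?_
    rw [← hl, Measure.map_apply (hY i) measurableSet_Icc]
  have hcard : ∀ (f : ι → ℝ) (ε : ℝ), ∏ i, (f i * ε ^ (if v i ≠ 0 then 1 else 0))
      = (∏ i, f i) * ε ^ (Fintype.card {i // v i ≠ 0}) := by
    intro f ε
    rw [Finset.prod_mul_distrib, Finset.prod_pow_eq_pow_sum, Finset.sum_boole, Fintype.card_subtype]
    simp
  set n : ℝ := (Fintype.card ι : ℝ) with hn
  have hn0 : 0 ≤ n := by positivity
  refine ⟨(∏ i, c i) * ((n + 1)⁻¹) ^ (Fintype.card {i // v i ≠ 0}), ∏ i, C i, 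
    mul_pos (Finset.prod_pos fun i _ => hc i) (by positivity),
    Finset.prod_pos fun i _ => hC i, fun ε h0 h1 => ⟨?_, ?_⟩⟩
  · have hd0 : 0 ≤ (n + 1)⁻¹ * ε := by positivity
    have hd2 : (n + 1)⁻¹ * ε ≤ ε := mul_le_of_le_one_left h0 (inv_le_one_of_one_le₀ (by linarith))
    have hd1 := hd2.trans h1
    rw [mul_assoc, ← mul_pow, ← hcard, ENNReal.ofReal_prod_of_nonneg
      (fun i _ => mul_nonneg (hc i).le (by positivity))]
    refine (Finset.prod_le_prod' fun i _ => (h i _ hd0 hd1).1).trans ?_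
    rw [← hpr]
    refine measure_mono fun ω hω => ?_
    have hω : ∀ i, Y i ω ∈ Set.Icc (-((n + 1)⁻¹ * ε)) ((n + 1)⁻¹ * ε) := hω
    show R ω ≤ ε
    refine abs_le_of_sq_le_sq' ?_ h0 |>.2
    rw [hR]
    calc ∑ i, Y i ω ^ 2 ≤ ∑ i : ι, ((n + 1)⁻¹ * ε) ^ 2 := by
          refine Finset.sum_le_sum fun i _ => ?_
          exact sq_le_sq' (hω i).1 (hω i).2
      _ = (n * ((n + 1)⁻¹)^2) * ε ^ 2 := by
          rw [Finset.sum_const, Finset.card_univ, nsmul_eq_mul, ← hn, mul_pow, mul_assoc]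
      _ ≤ 1 * ε ^ 2 := by
          gcongr
          rw [inv_pow, ← div_eq_mul_inv, div_le_one (by positivity)]; nlinarith
      _ = ε ^ 2 := one_mul _
  · rw [← hcard, ENNReal.ofReal_prod_of_nonneg
      (fun i _ => mul_nonneg (hC i).le (by positivity))]
    refine le_trans ?_ (Finset.prod_le_prod' fun i _ => (h i _ h0 h1).2)
    rw [← hpr]
    refine measure_mono fun ω hω i => ?_
    have hω : R ω ≤ ε := hω
    rw [Set.mem_Icc, ← abs_le]
    refine le_trans (abs_le_of_sq_le_sq ?_ (hR0 ω)) hω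
    rw [hR]
    exact Finset.single_le_sum (f := fun i => Y i ω ^ 2) (fun i _ => sq_nonneg _) (Finset.mem_univ i)

lemma g3 {Ω : Type*} [MeasurableSpace Ω] (P : Measure Ω) [IsProbabilityMeasure P]
    (R : Ω → ℝ) (hR0 : ∀ ω, 0 ≤ R ω) (hRm : Measurable R) (r m : ℕ) (hm : m ≠ 0)
    (c C : ℝ) (hc : 0 < c) (hC : 0 < C)
    (h : ∀ ε : ℝ, 0 ≤ ε → ε ≤ 1 → ENNReal.ofReal (c * ε ^ r) ≤ P {ω | R ω ≤ ε} ∧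
      P {ω | R ω ≤ ε} ≤ ENNReal.ofReal (C * ε ^ r)) :
    m < r ↔ ∫⁻ ω, (ENNReal.ofReal (R ω ^ m))⁻¹ ∂P < ⊤ := by
  have hm0 : (0:ℝ) < m := by positivity
  have hmeas : Measurable fun ω => (ENNReal.ofReal (R ω ^ m))⁻¹ := by fun_prop
  -- layer cake under a.s. positivity
  have key : (∀ᵐ ω ∂P, R ω ≠ 0) → ∫⁻ ω, (ENNReal.ofReal (R ω ^ m))⁻¹ ∂P
      = ∫⁻ t in Set.Ioi (0:ℝ), P {ω | R ω ≤ t ^ (-(1:ℝ) / m)} := by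
    intro hne
    have e1 : ∫⁻ ω, (ENNReal.ofReal (R ω ^ m))⁻¹ ∂P
        = ∫⁻ ω, ENNReal.ofReal ((R ω ^ m)⁻¹) ∂P := by
      refine lintegral_congr_ae ?_
      filter_upwards [hne] with ω hω
      have : 0 < R ω := lt_of_le_of_ne (hR0 ω) (Ne.symm hω)
      rw [ENNReal.ofReal_inv_of_pos (by positivity)]
    rw [e1, lintegral_eq_lintegral_meas_le P
      (Filter.Eventually.of_forall fun ω => by have := hR0 ω; positivity)
      (by fun_prop)]
    refine setLIntegral_congr_fun measurableSet_Ioi fun t (ht : 0 < t) => ?_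
    refine measure_congr ?_
    filter_upwards [hne] with ω hω
    have hp : 0 < R ω := lt_of_le_of_ne (hR0 ω) (Ne.symm hω)
    apply propext
    show t ≤ (R ω ^ m)⁻¹ ↔ R ω ≤ t ^ (-(1:ℝ) / m)
    rw [le_inv_comm₀ ht (by positivity), neg_div, Real.rpow_neg ht.le, ← Real.inv_rpow ht.le,
      ← Real.rpow_natCast, one_div,
      Real.le_rpow_inv_iff_of_pos hp.le (by positivity) hm0]
  have hpow : ∀ t : ℝ, 1 < t → (t ^ (-(1:ℝ) / m)) ^ r = t ^ (-(r:ℝ) / m) := by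
    intro t ht
    rw [← Real.rpow_natCast, ← Real.rpow_mul (by linarith)]
    congr 1; ring
  have hle : ∀ t : ℝ, 1 < t → 0 ≤ t ^ (-(1:ℝ) / m) ∧ t ^ (-(1:ℝ) / m) ≤ 1 := by
    intro t ht
    refine ⟨by positivity, Real.rpow_le_one_of_one_le_of_nonpos ht.le ?_⟩
    rw [neg_div]; simp
  constructor
  · intro hr
    have hne : ∀ᵐ ω ∂P, R ω ≠ 0 := by
      rw [ae_iff]
      have := (h 0 le_rfl zero_le_one).2
      rw [zero_pow (by omega), mul_zero, ENNReal.ofReal_zero, nonpos_iff_eq_zero] at this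
      refine measure_mono_null (fun ω hω => ?_) this
      simp only [not_not, ne_eq, Set.mem_ofPred_eq] at hω ⊢
      exact hω.le
    rw [key hne, ← Set.Ioc_union_Ioi_eq_Ioi (zero_le_one' ℝ)]
    refine (lintegral_union_le _ _ _).trans_lt (ENNReal.add_lt_top.2 ⟨?_, ?_⟩)
    · calc _ ≤ ∫⁻ t in Set.Ioc (0:ℝ) 1, 1 := lintegral_mono fun t => prob_le_one
        _ < ⊤ := by simp
    · have hint : IntegrableOn (fun t : ℝ => C * t ^ (-(r:ℝ) / m)) (Set.Ioi 1) := by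
        refine (integrableOn_Ioi_rpow_of_lt ?_ one_pos).const_mul C
        rw [div_lt_iff₀ hm0]
        have : (m:ℝ) < r := by exact_mod_cast hr
        linarith
      calc _ ≤ ∫⁻ t in Set.Ioi (1:ℝ), ENNReal.ofReal (C * t ^ (-(r:ℝ) / m)) := by
            refine setLIntegral_mono (by fun_prop) fun t (ht : 1 < t) => ?_
            rw [← hpow t ht]
            exact (h _ (hle t ht).1 (hle t ht).2).2
        _ < ⊤ := hint.lintegral_lt_top
  · intro hlt
    by_contra hr
    push Not at hr
    have hne : ∀ᵐ ω ∂P, R ω ≠ 0 := by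
      filter_upwards [ae_lt_top hmeas hlt.ne] with ω hω h0
      simp [h0, hm] at hω
    rw [key hne] at hlt
    apply not_integrableOn_Ioi_inv (a := 1)
    have hlt2 : ∫⁻ t in Set.Ioi (1:ℝ), ENNReal.ofReal (c * t⁻¹) < ⊤ := by
      refine lt_of_le_of_lt ?_ ((lintegral_mono_set (Set.Ioi_subset_Ioi zero_le_one)).trans_lt hlt)
      refine lintegral_mono_ae ?_
      refine (ae_restrict_iff' measurableSet_Ioi).2 (Filter.Eventually.of_forall fun t (ht : 1 < t) => ?_)
      refine le_trans (ENNReal.ofReal_le_ofReal ?_) (h _ (hle t ht).1 (hle t ht).2).1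
      rw [hpow t ht, ← Real.rpow_neg_one]
      gcongr
      · exact ht.le
      · rw [le_div_iff₀ hm0]
        have : (r:ℝ) ≤ m := by exact_mod_cast hr
        linarith
    have hi : IntegrableOn (fun t : ℝ => c * t⁻¹) (Set.Ioi 1) := by
      refine ⟨by fun_prop, ?_⟩
      rw [hasFiniteIntegral_iff_ofReal]
      · exact hlt2
      · refine (ae_restrict_iff' measurableSet_Ioi).2 (Filter.Eventually.of_forall fun t (ht : 1 < t) => ?_)
        have : 0 < t := by linarith
        show 0 ≤ c * t⁻¹
        positivity
    refine (hi.const_mul c⁻¹).congr (Filter.Eventually.of_forall fun t => ?_)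
    simp [hc.ne']

/-- For a centered Gaussian random vector `X` in `ℝᴺ` with covariance
matrix `K`, and `A ≥ 2`: `rank K ≥ A` if and only if `E[‖X‖^{-(A-1)}] < ∞` (the expectation
being `+∞` whenever `‖X‖ = 0` on a set of positive probability). -/
theorem stmt4 {Ω : Type*} [MeasurableSpace Ω] (P : Measure Ω) [IsProbabilityMeasure P]
    {N : ℕ} (X : Ω → EuclideanSpace ℝ (Fin N)) (hX : Measurable X)
    (hGauss : ∀ u : EuclideanSpace ℝ (Fin N), ∃ v : NNReal,
      P.map (fun ω => ⟪u, X ω⟫) = gaussianReal 0 v)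
    (A : ℕ) (hA : 2 ≤ A) :
    A ≤ (covMat P X).rank ↔
      ∫⁻ ω, (ENNReal.ofReal (‖X ω‖ ^ (A - 1)))⁻¹ ∂P < ⊤ := by
  classical
  have hG : HasGaussianLaw X P := by
    refine ⟨isGaussian_of_isGaussian_map fun L => ?_⟩
    obtain ⟨v, hv⟩ := hGauss ((InnerProductSpace.toDual ℝ _).symm L)
    rw [Measure.map_map (by fun_prop) hX]
    have e : (L ∘ X) = fun ω => ⟪(InnerProductSpace.toDual ℝ _).symm L, X ω⟫ := by
      ext ω; simp
    rw [e, hv]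
    infer_instance
  have hLp : ∀ u : EuclideanSpace ℝ (Fin N), MemLp (fun ω => ⟪u, X ω⟫) 2 P := fun u =>
    (hG.map_fun (innerSL ℝ u)).memLp_two
  have hLpc : ∀ i, MemLp (fun ω => X ω i) 2 P := fun i =>
    (hG.map_fun (EuclideanSpace.proj i)).memLp_two
  have hmean : ∀ u : EuclideanSpace ℝ (Fin N), ∫ ω, ⟪u, X ω⟫ ∂P = 0 := by
    intro u
    obtain ⟨v, hv⟩ := hGauss u
    have := integral_id_gaussianReal (μ := 0) (v := v)
    rwa [← hv, integral_map (by fun_prop) (by fun_prop)] at this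
  have hcov : ∀ u w : EuclideanSpace ℝ (Fin N),
      cov[fun ω => ⟪u, X ω⟫, fun ω => ⟪w, X ω⟫; P]
        = u.ofLp ⬝ᵥ (covMat P X).mulVec w.ofLp := by
    intro u w
    rw [covariance_eq_sub (hLp u) (hLp w), hmean, zero_mul, sub_zero]
    have e : ∀ ω, ((fun ω => ⟪u, X ω⟫) * (fun ω => ⟪w, X ω⟫)) ω
        = ∑ i, ∑ j, u i * (w j * (X ω i * X ω j)) := by
      intro ω
      simp only [Pi.mul_apply, PiLp.inner_apply, Finset.sum_mul_sum]
      refine Finset.sum_congr rfl fun i _ => Finset.sum_congr rfl fun j _ => ?_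
      simp; ring
    have hint : ∀ i j, Integrable (fun ω => X ω i * X ω j) P := fun i j =>
      (hLpc i).integrable_mul (hLpc j)
    simp_rw [e]
    rw [integral_finsetSum _ fun i _ => integrable_finsetSum _ fun j _ =>
      ((hint i j).const_mul _).const_mul _]
    simp only [dotProduct, Matrix.mulVec, Finset.mul_sum]
    refine Finset.sum_congr rfl fun i _ => ?_
    rw [integral_finsetSum _ fun j _ => ((hint i j).const_mul _).const_mul _]
    refine Finset.sum_congr rfl fun j _ => ?_
    rw [integral_const_mul, integral_const_mul]
    simp only [covMat, Matrix.of_apply]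
    ring
  have hH : (covMat P X).IsHermitian := by
    ext i j
    simp [covMat, mul_comm]
  set b := hH.eigenvectorBasis with hb
  have hcovb : ∀ i j, cov[fun ω => ⟪b i, X ω⟫, fun ω => ⟪b j, X ω⟫; P]
      = if i = j then hH.eigenvalues j else 0 := by
    intro i j
    rw [hcov, hH.mulVec_eigenvectorBasis, dotProduct_smul]
    have : (b i).ofLp ⬝ᵥ (b j).ofLp = ⟪b i, b j⟫ := by
      simp [PiLp.inner_apply, dotProduct, mul_comm]
    rw [this, orthonormal_iff_ite.1 b.orthonormal i j]
    simp
  have hind : iIndepFun (fun i ω => ⟪b i, X ω⟫) P := by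
    refine HasGaussianLaw.iIndepFun_of_covariance_eq_zero ?_ ?_
    · exact hG.map_fun (ContinuousLinearMap.pi fun i => innerSL ℝ (b i))
    · intro i j hij
      rw [hcovb, if_neg hij]
  choose v hv using fun i => hGauss (b i)
  have hvl : ∀ i, (v i : ℝ) = hH.eigenvalues i := by
    intro i
    have h1 := hcovb i i
    rw [if_pos rfl, covariance_self (by fun_prop)] at h1
    rw [← h1, ← variance_id_gaussianReal (μ := 0) (v := v i), ← hv i,
      variance_id_map (by fun_prop)]
  obtain ⟨c, C, hc, hC, h⟩ := g2 P (fun i ω => ⟪b i, X ω⟫) (fun i => by fun_prop) hind v hv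
    (fun ω => ‖X ω‖) (fun ω => norm_nonneg _) (fun ω => (b.sum_sq_inner_right (X ω)).symm)
  rw [← g3 P (fun ω => ‖X ω‖) (fun ω => norm_nonneg _) (by fun_prop) _ (A - 1) (by omega)
    c C hc hC h, hH.rank_eq_card_non_zero_eigs]
  have e : Fintype.card {i // hH.eigenvalues i ≠ 0} = Fintype.card {i // v i ≠ 0} := by
    refine Fintype.card_congr (Equiv.subtypeEquivRight fun i => ?_)
    rw [← hvl]; simp
  rw [e]
  omega
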